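/- Let n ≥ t ≥ 2. The cover ideal J_t(C_n) of the t-connected ideal of the cycle C_n contains a regular sequence of monomials of length t (equal to its height) if and only if t divides n. Equivalently, the vertex set of C_n can be partitioned into t pairwise disjoint minimal t-covers if and only if n is a multiple of t. -/

import Mathlib

open MvPolynomial

/-- `C` is a `t`-cover of the cycle `C_n` (vertices `ZMod n`). -/
def IsCycleCover (n t : ℕ) (C : Finset (ZMod n)) : Prop :=
  ∀ a : ZMod n, ∃ k : ℕ, k < t ∧ a + (k : ZMod n) ∈ C

/-- `C` is a minimal `t`-cover of the cycle `C_n`. -/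
def IsMinCycleCover (n t : ℕ) (C : Finset (ZMod n)) : Prop :=
  IsCycleCover n t C ∧ ∀ D ⊂ C, ¬ IsCycleCover n t D

section Helpers

/-- Two exponent vectors have disjoint supports. -/
def DisjExp {σ : Type*} (a b : σ →₀ ℕ) : Prop := ∀ v, a v = 0 ∨ b v = 0

lemma DisjExp.symm {σ : Type*} {a b : σ →₀ ℕ} (h : DisjExp a b) : DisjExp b a :=
  fun v => (h v).symm

lemma mem_ofList_monomial {K σ : Type*} [Field K] (l : List (σ →₀ ℕ)) (x : MvPolynomial σ K) :
    x ∈ (Ideal.ofList (l.map fun d => monomial d (1 : K)) • ⊤ :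
      Submodule (MvPolynomial σ K) (MvPolynomial σ K)) ↔
      ∀ m ∈ x.support, ∃ s ∈ l, s ≤ m := by
  have h : (Ideal.ofList (l.map fun d => monomial d (1 : K)) • ⊤ :
      Submodule (MvPolynomial σ K) (MvPolynomial σ K)) =
      Ideal.span ((fun s => monomial s (1 : K)) '' {d | d ∈ l}) := by
    rw [smul_eq_mul, Ideal.mul_top]
    refine congrArg Ideal.span (Set.ext fun p => ?_)
    exact List.mem_map
  rw [h, mem_ideal_span_monomial_image]
  rfl

lemma weaklyRegular_iff {K σ : Type*} [Field K] (l : List (σ →₀ ℕ)) (h0 : ∀ d ∈ l, d ≠ 0) :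
    RingTheory.Sequence.IsWeaklyRegular (MvPolynomial σ K) (l.map fun d => monomial d (1 : K)) ↔
      l.Pairwise DisjExp := by
  classical
  induction l using List.reverseRecOn with
  | nil => simp
  | append_singleton l e ih =>
    have h0' : ∀ d ∈ l, d ≠ 0 := fun d hd => h0 d (by simp [hd])
    rw [List.map_append, List.map_singleton,
      RingTheory.Sequence.isWeaklyRegular_append_iff,
      RingTheory.Sequence.isWeaklyRegular_singleton_iff, ih h0', List.pairwise_append,
      isSMulRegular_quotient_iff_mem_of_smul_mem]
    simp only [mem_ofList_monomial]
    simp only [smul_eq_mul, List.pairwise_singleton, List.mem_singleton,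
      forall_eq, true_and]
    refine and_congr_right fun hl => ⟨fun H s hs v => ?_, fun H x hx m hm => ?_⟩
    · by_contra! hv
      obtain ⟨k, hk, hks⟩ := H (monomial (s - Finsupp.single v 1) 1) (by
        intro m hm
        rw [monomial_mul, one_mul, support_monomial, if_neg one_ne_zero,
          Finset.mem_singleton] at hm
        subst hm
        refine ⟨s, hs, fun w => ?_⟩
        by_cases hw : v = w
        · subst hw
          simp
          omega
        · simp [Finsupp.single_apply, hw]) (s - Finsupp.single v 1) (by simp)
      have hne : k ≠ s := by
        rintro rfl
        have := hks v
        simp at this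
        omega
      have hsymm : Std.Symm (fun a b : σ →₀ ℕ => a ≠ b → DisjExp a b) :=
        ⟨fun a b hab hne => (hab hne.symm).symm⟩
      have hl2 : l.Pairwise (fun a b => a ≠ b → DisjExp a b) := by
        refine List.Pairwise.imp ?_ hl
        intro a b h _
        exact h
      have hd : DisjExp k s :=
        List.Pairwise.forall_of_forall (R := fun a b => a ≠ b → DisjExp a b)
          (fun _ _ h => absurd rfl h)
          hl2 hk hs hne
      apply h0' k hk
      ext w
      have := hks w
      simp at this
      have := hd w
      simp
      omega
    · obtain ⟨s, hs, hsm⟩ := hx (e + m) (by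
        rw [mem_support_iff, coeff_monomial_mul, one_mul]
        exact mem_support_iff.1 hm)
      refine ⟨s, hs, fun w => ?_⟩
      have h1 := hsm w
      have h2 := H s hs w
      simp at h1
      omega

lemma regular_of_pairwise {K σ : Type*} [Field K] (l : List (σ →₀ ℕ)) (h0 : ∀ d ∈ l, d ≠ 0)
    (hl : l.Pairwise DisjExp) :
    RingTheory.Sequence.IsRegular (MvPolynomial σ K) (l.map fun d => monomial d (1 : K)) := by
  refine ⟨(weaklyRegular_iff l h0).2 hl, fun h => ?_⟩
  have h1 : (1 : MvPolynomial σ K) ∈ (⊤ : Submodule (MvPolynomial σ K) (MvPolynomial σ K)) :=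
    trivial
  rw [h, mem_ofList_monomial] at h1
  obtain ⟨s, hs, hs0⟩ := h1 0 (by simp)
  exact h0 s hs (le_antisymm hs0 (zero_le))

lemma monomial_mem_cover {K : Type*} [Field K] {n t : ℕ} (d : ZMod n →₀ ℕ) :
    (monomial d (1 : K) ∈ ⨅ a : ZMod n,
      Ideal.span {q : MvPolynomial (ZMod n) K | ∃ k : ℕ, k < t ∧ q = X (a + (k : ZMod n))}) ↔
    IsCycleCover n t d.support := by
  have h : ∀ a : ZMod n,
      {q : MvPolynomial (ZMod n) K | ∃ k : ℕ, k < t ∧ q = X (a + (k : ZMod n))} =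
      X '' {v | ∃ k : ℕ, k < t ∧ v = a + (k : ZMod n)} := by
    intro a
    ext q
    simp only [Set.mem_ofPred_eq, Set.mem_image]
    constructor
    · rintro ⟨k, hk, rfl⟩
      exact ⟨_, ⟨k, hk, rfl⟩, rfl⟩
    · rintro ⟨_, ⟨k, hk, rfl⟩, rfl⟩
      exact ⟨k, hk, rfl⟩
  simp only [h, Ideal.mem_iInf, mem_ideal_span_X_image, IsCycleCover]
  refine forall_congr' fun a => ?_
  classical
  rw [support_monomial, if_neg one_ne_zero]
  simp only [Finset.mem_singleton, forall_eq, Set.mem_ofPred_eq, Finsupp.mem_support_iff]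
  constructor
  · rintro ⟨_, ⟨k, hk, rfl⟩, h⟩
    exact ⟨k, hk, h⟩
  · rintro ⟨k, hk, h⟩
    exact ⟨_, ⟨k, hk, rfl⟩, h⟩

lemma dvd_of_disjoint_covers {n t : ℕ} [NeZero n] (ht : 0 < t) (F : Fin t → Finset (ZMod n))
    (hF : ∀ i, IsCycleCover n t (F i)) (hd : ∀ i j, i ≠ j → Disjoint (F i) (F j)) : t ∣ n := by
  classical
  let c : Fin t → ZMod n → ℕ := fun i a =>
    ((Finset.range t).filter fun k : ℕ => a + (k : ZMod n) ∈ F i).card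
  have h1 : ∀ a i, 1 ≤ c i a := by
    intro a i
    obtain ⟨k, hk, hka⟩ := hF i a
    exact Finset.card_pos.2 ⟨k, by simp [hk, hka]⟩
  have h2 : ∀ a, ∑ i, c i a ≤ t := by
    intro a
    rw [← Finset.card_biUnion]
    · refine (Finset.card_le_card (t := Finset.range t) ?_).trans (by simp)
      intro k hk
      simp only [Finset.mem_biUnion, Finset.mem_filter] at hk
      obtain ⟨_, _, hk, _⟩ := hk
      exact hk
    · intro i _ j _ hij
      rw [Function.onFun, Finset.disjoint_left]
      intro k hk hk'
      exact Finset.disjoint_left.1 (hd i j hij) (Finset.mem_filter.1 hk).2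
        (Finset.mem_filter.1 hk').2
  let i0 : Fin t := ⟨0, ht⟩
  have h3 : ∀ a, c i0 a = 1 := by
    intro a
    have h4 : ∑ _i : Fin t, 1 = ∑ i, c i a :=
      le_antisymm (Finset.sum_le_sum fun i _ => h1 a i) (by simpa using h2 a)
    exact ((Finset.sum_eq_sum_iff_of_le fun i _ => h1 a i).1 h4 i0 (Finset.mem_univ _)).symm
  have h5 : ∑ a, c i0 a = t * (F i0).card := by
    simp only [c, Finset.card_filter]
    rw [Finset.sum_comm]
    have : ∀ k ∈ Finset.range t, (∑ a : ZMod n, if a + (k : ZMod n) ∈ F i0 then 1 else 0)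
        = (F i0).card := by
      intro k _
      have := Fintype.sum_equiv (Equiv.addRight (k : ZMod n))
        (fun a => if a + (k : ZMod n) ∈ F i0 then 1 else 0)
        (fun a => if a ∈ F i0 then 1 else 0) (fun a => rfl)
      rw [this]
      simp
    rw [Finset.sum_congr rfl this]
    simp
  simp only [h3, Finset.sum_const, Finset.card_univ, ZMod.card, smul_eq_mul, mul_one] at h5
  exact ⟨_, h5⟩

/-- If `t ∣ n`, the residue classes modulo `t` partition `ZMod n` into minimal covers. -/
lemma exists_partition {n t : ℕ} [NeZero n] (ht : 0 < t) (h : t ∣ n) :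
    ∃ F : Fin t → Finset (ZMod n),
        (∀ a : Fin t, IsMinCycleCover n t (F a)) ∧
        (∀ a b : Fin t, a ≠ b → Disjoint (F a) (F b)) ∧
        (Finset.univ : Finset (Fin t)).biUnion F = Finset.univ := by
  classical
  have : NeZero t := ⟨ht.ne'⟩
  let f := ZMod.castHom h (ZMod t)
  refine ⟨fun i => Finset.univ.filter fun x => f x = ((i : ℕ) : ZMod t), fun i => ⟨?_, ?_⟩, ?_, ?_⟩
  · intro a
    refine ⟨(((i : ℕ) : ZMod t) - f a).val, ZMod.val_lt _, ?_⟩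
    rw [Finset.mem_filter]
    refine ⟨Finset.mem_univ _, ?_⟩
    rw [map_add, map_natCast, ZMod.natCast_val, ZMod.cast_id]
    ring
  · intro D hD hcov
    obtain ⟨hsub, x, hx, hxD⟩ := Finset.ssubset_iff_exists_subset_erase.1 hD |>.imp
      (fun _ h => h) |> fun ⟨x, hx, hs⟩ =>
        (⟨hs.trans (Finset.erase_subset _ _), x, hx, fun hxD => by
          simpa using hs hxD⟩ : _ ∧ ∃ x, x ∈ _ ∧ x ∉ D)
    obtain ⟨k, hk, hkD⟩ := hcov x
    have h1 := (Finset.mem_filter.1 (hsub hkD)).2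
    have h2 := (Finset.mem_filter.1 hx).2
    rw [map_add, map_natCast, h2, add_eq_left, ZMod.natCast_eq_zero_iff] at h1
    have := Nat.eq_zero_of_dvd_of_lt h1 hk
    subst this
    simp at hkD
    exact hxD hkD
  · intro a b hab
    rw [Finset.disjoint_left]
    intro x hx hx'
    apply hab
    have h1 := (Finset.mem_filter.1 hx).2
    have h2 := (Finset.mem_filter.1 hx').2
    rw [h1, ZMod.natCast_eq_natCast_iff', Nat.mod_eq_of_lt a.2, Nat.mod_eq_of_lt b.2] at h2
    exact Fin.ext h2
  · ext x
    simp only [Finset.mem_biUnion, Finset.mem_univ, true_and, Finset.mem_filter, iff_true]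
    exact ⟨⟨(f x).val, ZMod.val_lt _⟩, by simp⟩

end Helpers

/-- For `n ≥ t ≥ 2`, the cover ideal `J_t(C_n)` (the intersection of the primes
generated by `t` cyclically consecutive variables) contains a regular sequence of
monomials of length `t` (its height) iff `t ∣ n`; equivalently, the vertex set of
`C_n` can be partitioned into `t` pairwise disjoint minimal `t`-covers iff `t ∣ n`. -/
theorem konig_iff_dvd {K : Type*} [Field K] {n t : ℕ} [NeZero n] (ht : 2 ≤ t) (hn : t ≤ n) :
    ((∃ L : List (MvPolynomial (ZMod n) K),
        (∀ p ∈ L, p ∈ ⨅ a : ZMod n,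
          Ideal.span {q : MvPolynomial (ZMod n) K | ∃ k : ℕ, k < t ∧ q = X (a + (k : ZMod n))}) ∧
        (∀ p ∈ L, ∃ d : (ZMod n) →₀ ℕ, p = monomial d 1) ∧
        RingTheory.Sequence.IsRegular (MvPolynomial (ZMod n) K) L ∧
        L.length = t) ↔ t ∣ n) ∧
    ((∃ F : Fin t → Finset (ZMod n),
        (∀ a : Fin t, IsMinCycleCover n t (F a)) ∧
        (∀ a b : Fin t, a ≠ b → Disjoint (F a) (F b)) ∧
        (Finset.univ : Finset (Fin t)).biUnion F = Finset.univ) ↔ t ∣ n) := by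
  classical
  have ht0 : 0 < t := by omega
  refine ⟨⟨?_, ?_⟩, ⟨?_, exists_partition ht0⟩⟩
  · rintro ⟨L, hJ, hmon, hreg, hlen⟩
    obtain ⟨l, rfl⟩ : ∃ l : List (ZMod n →₀ ℕ), L = l.map fun d => monomial d (1 : K) := by
      clear hJ hreg hlen
      induction L with
      | nil => exact ⟨[], rfl⟩
      | cons p L ih =>
        obtain ⟨l, rfl⟩ := ih fun q hq => hmon q (by simp [hq])
        obtain ⟨d, rfl⟩ := hmon p (by simp)
        exact ⟨d :: l, rfl⟩
    have hcov : ∀ d ∈ l, IsCycleCover n t d.support := fun d hd =>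
      (monomial_mem_cover (K := K) d).1 (hJ _ (List.mem_map_of_mem hd))
    have hne : ∀ d ∈ l, d ≠ 0 := by
      rintro d hd rfl
      obtain ⟨k, _, hk⟩ := hcov _ hd 0
      simp at hk
    have hpw := (weaklyRegular_iff l hne).1 hreg.toIsWeaklyRegular
    rw [List.length_map] at hlen
    subst hlen
    refine dvd_of_disjoint_covers ht0 (fun i => (l.get i).support)
      (fun i => hcov _ (List.get_mem _ _)) fun i j hij => ?_
    have hdis : DisjExp (l.get i) (l.get j) := by
      rcases lt_or_gt_of_ne hij with h | h
      · exact List.pairwise_iff_get.1 hpw _ _ h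
      · exact (List.pairwise_iff_get.1 hpw _ _ h).symm
    rw [Finset.disjoint_left]
    intro v hv hv'
    rw [Finsupp.mem_support_iff] at hv hv'
    exact (hdis v).elim hv hv'
  · intro hdvd
    obtain ⟨F, hF, hd, _⟩ := exists_partition ht0 hdvd
    let e : Fin t → (ZMod n →₀ ℕ) := fun i =>
      Finsupp.equivFunOnFinite.symm fun v => if v ∈ F i then 1 else 0
    have he : ∀ i, (e i).support = F i := by
      intro i
      ext v
      simp [e]
    have hne : ∀ d ∈ List.ofFn e, d ≠ 0 := by
      intro d hd hd0
      obtain ⟨i, rfl⟩ := (List.mem_ofFn' _ _).1 hd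
      obtain ⟨k, _, hk⟩ := (hF i).1 0
      rw [← he, hd0] at hk
      simp at hk
    refine ⟨(List.ofFn e).map fun d => monomial d (1 : K), ?_, ?_,
      regular_of_pairwise _ hne ?_, by simp⟩
    · intro p hp
      obtain ⟨d, hd, rfl⟩ := List.mem_map.1 hp
      obtain ⟨i, rfl⟩ := (List.mem_ofFn' _ _).1 hd
      rw [monomial_mem_cover, he]
      exact (hF i).1
    · intro p hp
      obtain ⟨d, hd, rfl⟩ := List.mem_map.1 hp
      exact ⟨d, rfl⟩
    · rw [List.pairwise_ofFn]
      intro i j hij v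
      by_contra! hv
      rw [← Finsupp.mem_support_iff, ← Finsupp.mem_support_iff, he, he] at hv
      exact Finset.disjoint_left.1 (hd i j hij.ne) hv.1 hv.2
  · rintro ⟨F, hF, hd, _⟩
    exact dvd_of_disjoint_covers ht0 F (fun i => (hF i).1) hd
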